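/- Fix p > 1, ε ∈ (0,1/2) and γ ∈ (0,1), and d ∈ ℕ with εd an integer. Let 𝒞 ⊆ B(d, εd) be a code such that any two distinct codewords have at most (ε²+γ)d ones in common, let T ⊆ 𝒞 with y ∈ T, and set S = {1,…,d} \ supp(y). Let A be the multiset of rows consisting of 2^{εd} copies of the all-ones word 1_d together with one copy of each word in star_2(T). Then F_p(A,S) ≤ |𝒞|^{1+p} · 2^{εd + (ε²+γ)dp} + 2^{εpd} + (2^{εd} + |𝒞|·2^{(ε²+γ)d})^p, where the three terms bound, respectively, the contribution of all patterns other than 1_S and 0_S, the contribution of the all-ones pattern 1_S, and the contribution of the all-zeros pattern 0_S. -/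

import Mathlib

open scoped Classical

/-- The support of a binary word: the set of coordinates where it equals 1. -/
def supp2 {d : ℕ} (w : Fin d → Fin 2) : Finset (Fin d) :=
  Finset.univ.filter (fun i => w i ≠ 0)

/-- `star_2(T)`: all binary words whose support is contained in the support of some
word in `T`. -/
def star2 {d : ℕ} (T : Finset (Fin d → Fin 2)) : Finset (Fin d → Fin 2) :=
  Finset.univ.filter (fun w => ∃ y ∈ T, supp2 w ⊆ supp2 y)

/-- The frequency of the pattern `z ∈ {0,1}^S` among the rows of the multiset `A`:
the number of rows `w` of `A` with `w|_S = z`. -/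
noncomputable def freq {d : ℕ} (A : Multiset (Fin d → Fin 2)) (S : Finset (Fin d))
    (z : S → Fin 2) : ℕ :=
  (A.filter (fun w => ∀ i : S, w i = z i)).card

/-- The projected frequency moment `F_p(A,S) = Σ_z f_z(A,S)^p`. -/
noncomputable def Fp {d : ℕ} (A : Multiset (Fin d → Fin 2)) (S : Finset (Fin d))
    (p : ℝ) : ℝ :=
  ∑ z : S → Fin 2, (freq A S z : ℝ) ^ p

/-!
For a codeword `x`, a row of `star2 {x}` with a prescribed restriction to `S` is determined by its
support outside `S`, so at most `2 ^ #(supp2 x \ S)` rows of `star2 {x}` show a given pattern. With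
`S` the complement of `supp2 y`, this exponent is `#(supp2 x ∩ supp2 y)`, which is small for
`x ≠ y`, and the rows of `star2 {y}` show no pattern but `0`. The pattern `1` has more ones than any
row of `star2 T`, so it comes only from the copies of the all-ones word. Every other nonzero pattern
has frequency at most `#T * 2 ^ m`, where `m` bounds the intersections, and the frequencies in
`star2 T` add up to `#(star2 T) ≤ #T * 2 ^ k`.
-/

section Freq

variable {d : ℕ} (A B : Multiset (Fin d → Fin 2)) (S : Finset (Fin d)) (z : S → Fin 2)

lemma freq_eq_count_map : freq A S z = (A.map fun w (i : S) ↦ w i).count z := by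
  simp only [freq, Multiset.count_map, funext_iff, eq_comm]

lemma freq_val (F : Finset (Fin d → Fin 2)) :
    freq F.val S z = (F.filter fun w ↦ ∀ i : S, w i = z i).card :=
  rfl

lemma freq_add : freq (A + B) S z = freq A S z + freq B S z := by
  simp only [freq_eq_count_map, Multiset.map_add, Multiset.count_add]

lemma freq_replicate_one (n : ℕ) :
    freq (Multiset.replicate n fun _ ↦ 1) S z = if z = 1 then n else 0 := by
  rw [freq_eq_count_map, Multiset.map_replicate, Multiset.count_replicate]
  exact if_congr eq_comm rfl rfl

lemma sum_freq : ∑ z : S → Fin 2, freq A S z = A.card := by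
  simp only [freq_eq_count_map]
  rw [Multiset.sum_count_eq_card fun _ _ ↦ Finset.mem_univ _, Multiset.card_map]

variable {A S} in
lemma sum_freq_rpow_le {p N : ℝ} (hp : 0 < p) (hN : 0 ≤ N) {Z : Finset (S → Fin 2)}
    (hZ : ∀ z ∈ Z, (freq A S z : ℝ) ≤ N) :
    ∑ z ∈ Z, (freq A S z : ℝ) ^ p ≤ A.card * N ^ p := by
  have hterm : ∀ z ∈ Z, (freq A S z : ℝ) ^ p ≤ freq A S z * N ^ p := by
    intro z hz
    rcases (freq A S z).eq_zero_or_pos with h0 | hpos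
    · simp [h0, hp.ne']
    · calc (freq A S z : ℝ) ^ p ≤ N ^ p :=
            Real.rpow_le_rpow (Nat.cast_nonneg _) (hZ z hz) hp.le
        _ ≤ freq A S z * N ^ p :=
            le_mul_of_one_le_left (Real.rpow_nonneg hN p) (by exact_mod_cast hpos)
  have hcard : ∑ z ∈ Z, freq A S z ≤ A.card :=
    (Finset.sum_le_univ_sum_of_nonneg fun _ ↦ Nat.zero_le _).trans_eq (sum_freq A S)
  calc ∑ z ∈ Z, (freq A S z : ℝ) ^ p
      ≤ ∑ z ∈ Z, freq A S z * N ^ p := Finset.sum_le_sum hterm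
    _ = (∑ z ∈ Z, freq A S z : ℕ) * N ^ p := by rw [Nat.cast_sum, Finset.sum_mul]
    _ ≤ A.card * N ^ p := by gcongr

lemma Fp_of_isEmpty [IsEmpty S] (p : ℝ) : Fp A S p = (A.card : ℝ) ^ p := by
  rw [Fp, Fintype.sum_unique, ← sum_freq A S, Fintype.sum_unique]

end Freq

section Star

variable {d : ℕ} {S : Finset (Fin d)} {T : Finset (Fin d → Fin 2)} {y : Fin d → Fin 2}

lemma mem_supp2 {w : Fin d → Fin 2} {i : Fin d} : i ∈ supp2 w ↔ w i ≠ 0 := by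
  simp only [supp2, Finset.mem_filter_univ]

lemma mem_star2 {w : Fin d → Fin 2} : w ∈ star2 T ↔ ∃ x ∈ T, supp2 w ⊆ supp2 x := by
  simp only [star2, Finset.mem_filter_univ]

lemma supp2_injective : Function.Injective (supp2 : (Fin d → Fin 2) → Finset (Fin d)) := by
  intro w w' h
  ext i
  have hi : w i ≠ 0 ↔ w' i ≠ 0 := by rw [← mem_supp2, ← mem_supp2, h]
  omega

lemma freq_star2_singleton_le (x : Fin d → Fin 2) (z : S → Fin 2) :
    freq (star2 {x}).val S z ≤ 2 ^ (supp2 x \ S).card := by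
  rw [freq_val, ← Finset.card_powerset]
  refine Finset.card_le_card_of_injOn (fun w ↦ supp2 w \ S) (fun w hw ↦ ?_) fun w hw w' hw' h ↦ ?_
  · simp only [Finset.coe_filter, mem_star2, Finset.mem_singleton, exists_eq_left,
      Set.mem_ofPred_eq] at hw
    exact Finset.mem_powerset.2 (Finset.sdiff_subset_sdiff hw.1 le_rfl)
  · replace hw := (Finset.mem_filter.1 hw).2
    replace hw' := (Finset.mem_filter.1 hw').2
    refine supp2_injective (Finset.ext fun i ↦ ?_)
    by_cases hi : i ∈ S
    · rw [mem_supp2, mem_supp2, hw ⟨i, hi⟩, hw' ⟨i, hi⟩]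
    · simpa [hi] using Finset.ext_iff.1 h i

lemma freq_star2_singleton_le_of_card_le {x : Fin d → Fin 2} {k : ℕ} (hx : (supp2 x).card ≤ k)
    (z : S → Fin 2) : freq (star2 {x}).val S z ≤ 2 ^ k :=
  (freq_star2_singleton_le x z).trans <| Nat.pow_le_pow_right two_pos <|
    (Finset.card_le_card Finset.sdiff_subset).trans hx

lemma freq_star2_le_sum (T : Finset (Fin d → Fin 2)) (z : S → Fin 2) :
    freq (star2 T).val S z ≤ ∑ x ∈ T, freq (star2 {x}).val S z := by
  simp only [freq_val]
  refine (Finset.card_le_card fun w hw ↦ ?_).trans Finset.card_biUnion_le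
  obtain ⟨hwT, hwz⟩ := Finset.mem_filter.1 hw
  obtain ⟨x, hx, hwx⟩ := mem_star2.1 hwT
  exact Finset.mem_biUnion.2
    ⟨x, hx, Finset.mem_filter.2 ⟨mem_star2.2 ⟨x, Finset.mem_singleton_self x, hwx⟩, hwz⟩⟩

lemma freq_star2_eq_zero {z : S → Fin 2} (hz : ∀ x ∈ T, ∃ i : S, z i ≠ 0 ∧ ↑i ∉ supp2 x) :
    freq (star2 T).val S z = 0 := by
  rw [freq_val, Finset.card_eq_zero, Finset.filter_eq_empty_iff]
  intro w hw hwz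
  obtain ⟨x, hx, hwx⟩ := mem_star2.1 hw
  obtain ⟨i, hzi, hix⟩ := hz x hx
  exact hix (hwx (mem_supp2.2 (hwz i ▸ hzi)))

lemma freq_star2_one_eq_zero {k : ℕ} (hT : ∀ x ∈ T, (supp2 x).card ≤ k) (hkS : k < S.card) :
    freq (star2 T).val S 1 = 0 := by
  refine freq_star2_eq_zero fun x hx ↦ ?_
  obtain ⟨i, hiS, hix⟩ := Finset.exists_mem_notMem_of_card_lt_card ((hT x hx).trans_lt hkS)
  exact ⟨⟨i, hiS⟩, Fin.zero_ne_one.symm, hix⟩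

lemma freq_star2_singleton_eq_zero (hS : Disjoint S (supp2 y)) {z : S → Fin 2} (hz : z ≠ 0) :
    freq (star2 {y}).val S z = 0 := by
  obtain ⟨i, hi⟩ := Function.ne_iff.1 hz
  refine freq_star2_eq_zero fun x hx ↦ ⟨i, hi, ?_⟩
  rw [Finset.mem_singleton.1 hx]
  exact Finset.disjoint_left.1 hS i.2

lemma card_star2_le {k : ℕ} (hT : ∀ x ∈ T, (supp2 x).card ≤ k) :
    (star2 T).card ≤ T.card * 2 ^ k := by
  have hfreq : freq (star2 T).val ∅ 0 = (star2 T).card := by simp [freq_val]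
  rw [← hfreq, ← smul_eq_mul]
  exact (freq_star2_le_sum T 0).trans <| Finset.sum_le_card_nsmul _ _ _ fun x hx ↦
    freq_star2_singleton_le_of_card_le (hT x hx) 0

lemma freq_star2_le_add {m : ℝ} (hy : y ∈ T)
    (hm : ∀ x ∈ T, x ≠ y → ((supp2 x \ S).card : ℝ) ≤ m) (z : S → Fin 2) :
    (freq (star2 T).val S z : ℝ) ≤ freq (star2 {y}).val S z + T.card * 2 ^ m := by
  have hother : ∀ x ∈ T.erase y, (freq (star2 {x}).val S z : ℝ) ≤ 2 ^ m := by
    intro x hx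
    obtain ⟨hxy, hxT⟩ := Finset.mem_erase.1 hx
    calc (freq (star2 {x}).val S z : ℝ)
        ≤ 2 ^ (supp2 x \ S).card := by exact_mod_cast freq_star2_singleton_le x z
      _ = 2 ^ ((supp2 x \ S).card : ℝ) := (Real.rpow_natCast _ _).symm
      _ ≤ 2 ^ m := Real.rpow_le_rpow_of_exponent_le one_le_two (hm x hxT hxy)
  calc (freq (star2 T).val S z : ℝ)
      ≤ ∑ x ∈ T, (freq (star2 {x}).val S z : ℝ) := by exact_mod_cast freq_star2_le_sum T z
    _ = freq (star2 {y}).val S z + ∑ x ∈ T.erase y, (freq (star2 {x}).val S z : ℝ) :=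
        (Finset.add_sum_erase _ _ hy).symm
    _ ≤ freq (star2 {y}).val S z + (T.erase y).card * 2 ^ m := by
        gcongr
        exact (Finset.sum_le_card_nsmul _ _ _ hother).trans_eq (nsmul_eq_mul _ _)
    _ ≤ freq (star2 {y}).val S z + T.card * 2 ^ m := by
        gcongr
        exact Finset.erase_subset _ _

lemma freq_star2_le_of_ne_zero {m : ℝ} (hy : y ∈ T) (hS : Disjoint S (supp2 y))
    (hm : ∀ x ∈ T, x ≠ y → ((supp2 x \ S).card : ℝ) ≤ m) {z : S → Fin 2} (hz : z ≠ 0) :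
    (freq (star2 T).val S z : ℝ) ≤ T.card * 2 ^ m := by
  simpa only [freq_star2_singleton_eq_zero hS hz, Nat.cast_zero, zero_add]
    using freq_star2_le_add hy hm z

lemma freq_star2_le_two_pow_add {k : ℕ} {m : ℝ} (hy : y ∈ T) (hyk : (supp2 y).card ≤ k)
    (hm : ∀ x ∈ T, x ≠ y → ((supp2 x \ S).card : ℝ) ≤ m) (z : S → Fin 2) :
    (freq (star2 T).val S z : ℝ) ≤ 2 ^ k + T.card * 2 ^ m := by
  have hself : (freq (star2 {y}).val S z : ℝ) ≤ 2 ^ k := by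
    exact_mod_cast freq_star2_singleton_le_of_card_le hyk z
  exact (freq_star2_le_add hy hm z).trans (by gcongr)

lemma sum_freq_star2_rpow_le {k : ℕ} {m p : ℝ} (hp : 0 < p) (hy : y ∈ T)
    (hT : ∀ x ∈ T, (supp2 x).card ≤ k) (hS : Disjoint S (supp2 y))
    (hm : ∀ x ∈ T, x ≠ y → ((supp2 x \ S).card : ℝ) ≤ m)
    {Z : Finset (S → Fin 2)} (hZ : 0 ∉ Z) :
    ∑ z ∈ Z, (freq (star2 T).val S z : ℝ) ^ p
      ≤ (T.card : ℝ) ^ (1 + p) * 2 ^ (k + m * p) := by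
  have hcard : ((star2 T).card : ℝ) ≤ T.card * 2 ^ k := by exact_mod_cast card_star2_le hT
  calc ∑ z ∈ Z, (freq (star2 T).val S z : ℝ) ^ p
      ≤ (star2 T).card * (T.card * 2 ^ m) ^ p :=
        sum_freq_rpow_le hp (by positivity) fun z hz ↦
          freq_star2_le_of_ne_zero hy hS hm (ne_of_mem_of_not_mem hz hZ)
    _ ≤ T.card * 2 ^ k * (T.card * 2 ^ m) ^ p := by gcongr
    _ = (T.card : ℝ) ^ (1 + p) * 2 ^ (k + m * p) := by
        rw [Real.rpow_one_add' (Nat.cast_nonneg _) (by positivity), Real.rpow_add two_pos,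
          Real.rpow_natCast, Real.rpow_mul zero_le_two,
          Real.mul_rpow (Nat.cast_nonneg _) (by positivity)]
        ring

lemma Fp_replicate_one_add_star2_le {n k : ℕ} {m p : ℝ} (hp : 0 < p) (hy : y ∈ T)
    (hT : ∀ x ∈ T, (supp2 x).card ≤ k) (hS : Disjoint S (supp2 y)) (hkS : k < S.card)
    (hm : ∀ x ∈ T, x ≠ y → ((supp2 x \ S).card : ℝ) ≤ m) :
    Fp (Multiset.replicate n (fun _ ↦ 1) + (star2 T).val) S p
      ≤ (T.card : ℝ) ^ (1 + p) * 2 ^ (k + m * p) + (n : ℝ) ^ p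
        + (2 ^ k + T.card * 2 ^ m) ^ p := by
  obtain ⟨i, hi⟩ := Finset.card_pos.1 (pos_of_gt hkS)
  have hne : (0 : S → Fin 2) ≠ 1 := Function.ne_iff.2 ⟨⟨i, hi⟩, Fin.zero_ne_one⟩
  have hfreq {z : S → Fin 2} (hz : z ≠ 1) :
      freq (Multiset.replicate n (fun _ ↦ 1) + (star2 T).val) S z = freq (star2 T).val S z := by
    rw [freq_add, freq_replicate_one, if_neg hz, zero_add]
  have hone : freq (Multiset.replicate n (fun _ ↦ 1) + (star2 T).val) S 1 = n := by
    rw [freq_add, freq_replicate_one, if_pos rfl, freq_star2_one_eq_zero hT hkS, add_zero]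
  have hzero : (freq (star2 T).val S 0 : ℝ) ^ p ≤ (2 ^ k + T.card * 2 ^ m) ^ p :=
    Real.rpow_le_rpow (Nat.cast_nonneg _) (freq_star2_le_two_pow_add hy (hT y hy) hm 0) hp.le
  have hrest := sum_freq_star2_rpow_le hp hy hT hS hm
    (Finset.notMem_erase (0 : S → Fin 2) (Finset.univ.erase 1))
  rw [Fp, ← Finset.add_sum_erase _ _ (Finset.mem_univ 1), hone,
    Finset.sum_congr rfl fun z hz ↦ by rw [hfreq (Finset.ne_of_mem_erase hz)],
    ← Finset.add_sum_erase _ _ (Finset.mem_erase.2 ⟨hne, Finset.mem_univ _⟩)]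
  linarith

lemma Fp_replicate_one_add_star2_le_of_isEmpty [IsEmpty S] (n : ℕ) {k : ℕ} {p : ℝ} (hp : 0 ≤ p)
    (hT : ∀ x ∈ T, (supp2 x).card ≤ k) :
    Fp (Multiset.replicate n (fun _ ↦ 1) + (star2 T).val) S p ≤ (n + T.card * 2 ^ k) ^ p := by
  rw [Fp_of_isEmpty, Multiset.card_add, Multiset.card_replicate]
  exact Real.rpow_le_rpow (Nat.cast_nonneg _)
    (by exact_mod_cast Nat.add_le_add_left (card_star2_le hT) n) hp

end Star

theorem stmt_9_general {d k : ℕ} {p ε δ : ℝ} (hp : 0 < p) (hε : ε < 1 / 2) (hk : (k : ℝ) = ε * d)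
    {T : Finset (Fin d → Fin 2)} (hT : ∀ x ∈ T, (supp2 x).card ≤ k) {y : Fin d → Fin 2} (hy : y ∈ T)
    (hm : ∀ x ∈ T, x ≠ y → ((supp2 x ∩ supp2 y).card : ℝ) ≤ δ * d) :
    Fp (Multiset.replicate (2 ^ k) (fun _ ↦ 1) + (star2 T).val) (Finset.univ \ supp2 y) p
      ≤ (T.card : ℝ) ^ (1 + p) * (2 : ℝ) ^ (ε * d + δ * d * p) + (2 : ℝ) ^ (ε * p * d)
        + ((2 : ℝ) ^ (ε * d) + T.card * (2 : ℝ) ^ (δ * d)) ^ p := by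
  rw [mul_right_comm ε p, ← hk, Real.rpow_mul zero_le_two, Real.rpow_natCast]
  rcases d.eq_zero_or_pos with hd | hd
  -- There is a single pattern, which is at once the all-ones and the all-zeros pattern.
  · refine le_add_of_nonneg_of_le (by positivity) ?_
    have hk0 : k = 0 := by simpa [hd] using hk
    have hm0 : δ * d = 0 := by simp [hd]
    have hS : IsEmpty ↥(Finset.univ \ supp2 y) := ⟨fun i ↦ by have := i.1.isLt; omega⟩
    have hFp := Fp_replicate_one_add_star2_le_of_isEmpty (S := Finset.univ \ supp2 y)
      (2 ^ k) hp.le hT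
    exact hFp.trans_eq (by rw [hm0, hk0, Real.rpow_zero, pow_zero, pow_zero, Nat.cast_one])
  · have hkd : 2 * k < d := by
      have : (2 * k : ℝ) < d := by rw [hk]; nlinarith [(Nat.cast_pos (α := ℝ)).2 hd]
      exact_mod_cast this
    have hkS : k < (Finset.univ \ supp2 y).card := by
      rw [Finset.card_univ_sdiff, Fintype.card_fin]
      have := hT y hy
      omega
    have hm' : ∀ x ∈ T, x ≠ y → ((supp2 x \ (Finset.univ \ supp2 y)).card : ℝ) ≤ δ * d := by
      simpa only [← Finset.compl_eq_univ_sdiff, sdiff_compl, Finset.inf_eq_inter] using hm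
    simpa using Fp_replicate_one_add_star2_le (n := 2 ^ k) hp hy hT Finset.sdiff_disjoint hkS hm'

/-- Fix `p > 1`, `ε ∈ (0,1/2)`, `γ ∈ (0,1)`, and `d ∈ ℕ` with `k = εd`
an integer.  Let `𝒞 ⊆ B(d, εd)` be a code such that any two distinct codewords have at
most `(ε²+γ)d` ones in common, let `T ⊆ 𝒞` with `y ∈ T`, and set
`S = {1,…,d} \ supp(y)`.  Let `A` be the multiset of rows consisting of `2^{εd}` copies of
the all-ones word together with one copy of each word in `star_2(T)`.  Then
`F_p(A,S) ≤ |𝒞|^{1+p}·2^{εd + (ε²+γ)dp} + 2^{εpd} + (2^{εd} + |𝒞|·2^{(ε²+γ)d})^p`. -/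
theorem stmt_9 (d k : ℕ) (p ε γ : ℝ) (hp : 1 < p) (hε : ε ∈ Set.Ioo (0 : ℝ) (1 / 2))
    (hγ : γ ∈ Set.Ioo (0 : ℝ) 1) (hk : (k : ℝ) = ε * d)
    (𝒞 : Finset (Fin d → Fin 2)) (hw : ∀ z ∈ 𝒞, (supp2 z).card = k)
    (hcode : ∀ x ∈ 𝒞, ∀ x' ∈ 𝒞, x ≠ x' →
      ((supp2 x ∩ supp2 x').card : ℝ) ≤ (ε ^ 2 + γ) * d)
    (T : Finset (Fin d → Fin 2)) (hT : T ⊆ 𝒞)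
    (y : Fin d → Fin 2) (hy : y ∈ T) :
    let S : Finset (Fin d) := Finset.univ \ supp2 y
    let A : Multiset (Fin d → Fin 2) :=
      Multiset.replicate (2 ^ k) (fun _ => 1) + (star2 T).val
    Fp A S p ≤ (𝒞.card : ℝ) ^ (1 + p) * (2 : ℝ) ^ (ε * d + (ε ^ 2 + γ) * d * p)
        + (2 : ℝ) ^ (ε * p * d)
        + ((2 : ℝ) ^ (ε * d) + (𝒞.card : ℝ) * (2 : ℝ) ^ ((ε ^ 2 + γ) * d)) ^ p := by
  have hp0 : 0 < p := one_pos.trans hp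
  exact (stmt_9_general hp0 hε.2 hk (fun x hx ↦ (hw x (hT hx)).le) hy
    fun x hx hxy ↦ hcode x (hT hx) y (hT hy) hxy).trans (by gcongr)
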